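/- arXiv:1001.2638 — 2 statements merged into one kernel-verified Lean document; each statement's English description precedes it below -/
import Mathlib

section
/- Let p be a prime with p ≡ 3 (mod 4) and p > 3. Then C(p) = √p · Σ_{n=1}^{(p-1)/2} cot(π n²/p) is an odd positive integer, divisible by p but not by p². -/
/-- `C p = √p ∑_{n=1}^{(p-1)/2} cot(π n² / p)`. -/
noncomputable def C (p : ℕ) : ℝ :=
  Real.sqrt p * ∑ n ∈ Finset.Icc 1 ((p - 1) / 2), Real.cot (Real.pi * (n : ℝ) ^ 2 / p)

/-!
Let `χ` be the quadratic character modulo `p`, `A = ∑ a χ(a)` and `S = ∑ χ(a) cot (π a / p)`, both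
over the residues `0 ≤ a < p`. Since each residue `a` has `1 + χ(a)` square roots and the cotangent
is odd, `C(p) = √p S / 2`. Two facts about `S` identify `C(p)` with `|A|`. First,
`S = (2p / π) L(1, χ)`, and `L(1, χ) ≥ 0` because the Euler product of a quadratic character has
positive factors to the right of `1`. Second, summing the Fourier expansion of `χ` against
`a ↦ a`, whose discrete Fourier transform is essentially the cotangent, gives `4 A² = p S²`, as the
Gauss sum has square `χ(-1) p = -p`. Finally `A ≡ ∑ a = p (p - 1) / 2` modulo `2`,
`A ≡ ∑ a ^ ((p + 1) / 2) = 0` modulo `p`, and `0 < |A| ≤ p (p - 1) / 2 < p²`.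
-/

open Filter Topology Real Finset ZMod HurwitzZeta

section HurwitzZeta

lemma rpow_neg_sub_rpow_neg_le {x y s : ℝ} (hx : 0 < x) (hxy : x ≤ y) (hs : 1 ≤ s) :
    x ^ (-s) - y ^ (-s) ≤ x ^ (-s) * (s * (y - x) / y) := by
  have hy : 0 < y := hx.trans_le hxy
  have bernoulli : 1 - s * (y - x) / y ≤ (x / y) ^ s := by
    have h := one_add_mul_self_le_rpow_one_add (s := x / y - 1)
      (by linarith [div_pos hx hy]) hs
    rw [add_sub_cancel] at h
    refine le_of_eq_of_le ?_ h
    field_simp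
    ring
  have hmul : x ^ (-s) * (x / y) ^ s = y ^ (-s) := by
    rw [Real.div_rpow hx.le hy.le, Real.rpow_neg hx.le, Real.rpow_neg hy.le]
    field_simp
  linarith [mul_le_mul_of_nonneg_left bernoulli (Real.rpow_nonneg hx.le (-s))]

lemma norm_rpow_neg_sub_rpow_neg_le {a s : ℝ} (ha₀ : 0 < a) (ha₁ : a < 1) (hs₁ : 1 ≤ s)
    (hs₂ : s ≤ 2) (n : ℕ) :
    ‖(n + 1 + a) ^ (-s) - (n + 1 - a) ^ (-s)‖ ≤
      (1 - a) ^ (-2 : ℝ) * (4 * a) * (1 / ((n : ℝ) + 1) ^ 2) := by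
  have hn : (1 : ℝ) ≤ n + 1 := by simp
  have hx : (1 - a) * (n + 1) ≤ n + 1 - a := by nlinarith [n.cast_nonneg (α := ℝ)]
  have hx₀ : 0 < (1 - a) * ((n : ℝ) + 1) := mul_pos (by linarith) (by linarith)
  have hxy : (n : ℝ) + 1 - a ≤ n + 1 + a := by linarith
  have hfirst : ((n : ℝ) + 1 - a) ^ (-s) ≤ (1 - a) ^ (-2 : ℝ) * (1 / ((n : ℝ) + 1)) := calc
    ((n : ℝ) + 1 - a) ^ (-s) ≤ ((1 - a) * ((n : ℝ) + 1)) ^ (-s) :=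
      Real.rpow_le_rpow_of_nonpos hx₀ hx (by linarith)
    _ = (1 - a) ^ (-s) * ((n : ℝ) + 1) ^ (-s) :=
      Real.mul_rpow (by linarith) (by linarith)
    _ ≤ (1 - a) ^ (-2 : ℝ) * ((n : ℝ) + 1) ^ (-1 : ℝ) := by
      gcongr ?_ * ?_
      · exact Real.rpow_le_rpow_of_exponent_ge (by linarith) (by linarith) (by linarith)
      · exact Real.rpow_le_rpow_of_exponent_le hn (by linarith)
    _ = (1 - a) ^ (-2 : ℝ) * (1 / ((n : ℝ) + 1)) := by rw [Real.rpow_neg_one, one_div]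
  have hsecond : s * ((n + 1 + a) - (n + 1 - a)) / ((n : ℝ) + 1 + a) ≤ 4 * a / (n + 1) :=
    div_le_div₀ (by positivity) (by nlinarith) (by linarith) (by linarith)
  rw [norm_sub_rev, Real.norm_of_nonneg
    (sub_nonneg.2 (Real.rpow_le_rpow_of_nonpos (hx₀.trans_le hx) hxy (by linarith)))]
  calc ((n : ℝ) + 1 - a) ^ (-s) - (n + 1 + a) ^ (-s)
    _ ≤ ((n : ℝ) + 1 - a) ^ (-s) * (s * ((n + 1 + a) - (n + 1 - a)) / (n + 1 + a)) :=
      rpow_neg_sub_rpow_neg_le (hx₀.trans_le hx) hxy hs₁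
    _ ≤ (1 - a) ^ (-2 : ℝ) * (1 / ((n : ℝ) + 1)) * (4 * a / (n + 1)) := by
      have : 0 < 1 - a := by linarith
      gcongr
    _ = (1 - a) ^ (-2 : ℝ) * (4 * a) * (1 / ((n : ℝ) + 1) ^ 2) := by field_simp

lemma continuousOn_tsum_rpow_neg_sub_rpow_neg {a : ℝ} (ha₀ : 0 < a) (ha₁ : a < 1) :
    ContinuousOn (fun s : ℝ ↦ ∑' n : ℕ, ((n + 1 + a) ^ (-s) - (n + 1 - a) ^ (-s)))
      (Set.Icc 1 2) := by
  refine continuousOn_tsum (fun n ↦ ?_)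
    (((summable_nat_add_iff 1).2 (Real.summable_one_div_nat_pow.2 one_lt_two)).mul_left
      ((1 - a) ^ (-2 : ℝ) * (4 * a))) fun n s hs ↦ ?_
  · have : (0 : ℝ) ≤ n := n.cast_nonneg
    have h₁ : (n : ℝ) + 1 + a ≠ 0 := by linarith
    have h₂ : (n : ℝ) + 1 - a ≠ 0 := by linarith
    fun_prop (disch := assumption)
  · simpa using norm_rpow_neg_sub_rpow_neg_le ha₀ ha₁ hs.1 hs.2 n

lemma tsum_inv_sub_inv_eq_cot {a : ℝ} (ha₀ : 0 < a) (ha₁ : a < 1) :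
    ∑' n : ℕ, ((n + 1 + a) ^ (-1 : ℝ) - (n + 1 - a) ^ (-1 : ℝ)) =
      π * Real.cot (π * a) - a ^ (-1 : ℝ) := by
  have ha : (a : ℂ) ∈ Complex.integerComplement := by
    rintro ⟨n, hn⟩
    have hna : (n : ℝ) = a := by exact_mod_cast hn
    rw [← hna] at ha₀ ha₁
    norm_cast at ha₀ ha₁
    omega
  have h := cot_series_rep' ha
  apply Complex.ofReal_injective
  push_cast [Real.rpow_neg_one]
  rw [← one_div, h]
  refine tsum_congr fun n ↦ ?_
  rw [one_div, one_div, ← neg_sub (n + 1 : ℂ) a, inv_neg]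
  ring

lemma tsum_rpow_neg_sub_rpow_neg {a s : ℝ} (ha₀ : 0 < a) (ha₁ : a < 1) (hs : 1 < s) :
    ((∑' n : ℕ, ((n + 1 + a) ^ (-s) - (n + 1 - a) ^ (-s)) : ℝ) : ℂ) =
      2 * hurwitzZetaOdd a s - (a ^ (-s) : ℝ) := by
  have hsum : Summable fun n : ℕ ↦ (n + a) ^ (-s) := by
    refine ((Real.summable_one_div_nat_add_rpow a s).2 hs).congr fun n ↦ ?_
    have hn : 0 < n + a := by positivity
    rw [abs_of_pos hn, Real.rpow_neg hn.le, one_div]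
  have hshift : HasSum (fun n : ℕ ↦ (n + 1 + a) ^ (-s) - (n + a) ^ (-s)) (-a ^ (-s)) := by
    simpa using ((hasSum_nat_add_iff' 1).2 hsum.hasSum).sub hsum.hasSum
  have hodd := (hasSum_nat_hurwitzZetaOdd_of_mem_Icc ⟨ha₀.le, ha₁.le⟩
    (s := s) (by simpa using hs)).mul_left 2
  rw [Complex.ofReal_tsum, sub_eq_add_neg, ← Complex.ofReal_neg]
  refine ((hodd.add (Complex.hasSum_ofReal.2 hshift)).congr_fun fun n ↦ ?_).tsum_eq
  have : (0 : ℝ) ≤ n := n.cast_nonneg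
  rw [Complex.ofReal_sub, Complex.ofReal_sub, Complex.ofReal_cpow (by linarith),
    Complex.ofReal_cpow (by linarith), Complex.ofReal_cpow (by linarith)]
  push_cast [Complex.cpow_neg]
  ring

lemma hurwitzZetaOdd_apply_one {a : ℝ} (ha₀ : 0 < a) (ha₁ : a < 1) :
    hurwitzZetaOdd a 1 = (π / 2 * Real.cot (π * a) : ℝ) := by
  set F : ℝ → ℝ := fun s ↦ ∑' n : ℕ, ((n + 1 + a) ^ (-s) - (n + 1 - a) ^ (-s)) + a ^ (-s) with hF
  have hF_one : F 1 = π * Real.cot (π * a) := by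
    simp only [hF, tsum_inv_sub_inv_eq_cot ha₀ ha₁, sub_add_cancel]
  have hF_cont : ContinuousWithinAt F (Set.Icc 1 2) 1 :=
    (continuousOn_tsum_rpow_neg_sub_rpow_neg ha₀ ha₁ 1 (by norm_num)).add
      (by fun_prop (disch := exact ha₀.ne'))
  have hF_lim : Tendsto (fun s ↦ (F s : ℂ)) (𝓝[>] 1) (𝓝 (F 1)) :=
    (Complex.continuous_ofReal.tendsto _).comp
      (hF_cont.mono_left (nhdsWithin_le_of_mem (Icc_mem_nhdsGT one_lt_two)))
  have hζ_lim : Tendsto (fun s : ℝ ↦ 2 * hurwitzZetaOdd a s) (𝓝[>] 1)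
      (𝓝 (2 * hurwitzZetaOdd a 1)) := by
    have hcont : Continuous fun s : ℝ ↦ 2 * hurwitzZetaOdd a s :=
      continuous_const.mul
        ((differentiable_hurwitzZetaOdd a).continuous.comp Complex.continuous_ofReal)
    simpa using (hcont.tendsto 1).mono_left nhdsWithin_le_nhds
  have heq : (fun s ↦ (F s : ℂ)) =ᶠ[𝓝[>] 1] fun s ↦ 2 * hurwitzZetaOdd a s := by
    filter_upwards [self_mem_nhdsWithin] with s hs
    rw [Complex.ofReal_add, tsum_rpow_neg_sub_rpow_neg ha₀ ha₁ hs, sub_add_cancel]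
  rw [← mul_right_inj' (two_ne_zero (α := ℂ)),
    ← tendsto_nhds_unique (hF_lim.congr' heq) hζ_lim, hF_one]
  push_cast
  ring

end HurwitzZeta

section FiniteSums

variable {N : ℕ} [NeZero N]

lemma sum_zmod_eq_sum_range {M : Type*} [AddCommMonoid M] (f : ZMod N → M) :
    ∑ a, f a = ∑ n ∈ range N, f n :=
  sum_nbij' ZMod.val Nat.cast (by simp [ZMod.val_lt]) (by simp) (by simp)
    (fun n hn ↦ ZMod.val_cast_of_lt (mem_range.1 hn)) (by simp)

variable (N) in
lemma two_mul_sum_val : 2 * ∑ a : ZMod N, a.val = N * (N - 1) := by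
  rw [sum_zmod_eq_sum_range, ← sum_range_id_mul_two, mul_comm]
  congr 1
  exact sum_congr rfl fun n hn ↦ ZMod.val_cast_of_lt (mem_range.1 hn)

lemma sum_zmod_eq_of_even {M : Type*} [AddCommMonoid M] (hN : Odd N) {f : ZMod N → M}
    (hf : f.Even) :
    ∑ a, f a = f 0 + 2 • ∑ n ∈ Icc 1 ((N - 1) / 2), f n := by
  obtain ⟨m, rfl⟩ := hN
  have lower_half (g : ℕ → M) : ∑ n ∈ Icc 1 m, g n = ∑ n ∈ range m, g (n + 1) := by
    rw [← Ico_add_one_right_eq_Icc, sum_Ico_eq_sum_range]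
    simp only [add_tsub_cancel_right, add_comm]
  have upper_half : ∑ n ∈ range m, f (m + 1 + n : ℕ) = ∑ n ∈ range m, f (n + 1 : ℕ) := by
    rw [← sum_range_reflect]
    refine sum_congr rfl fun n hn ↦ ?_
    have hn' := mem_range.1 hn
    rw [← hf]
    congr 1
    rw [neg_eq_iff_add_eq_zero, ← Nat.cast_add, ← ZMod.natCast_self (2 * m + 1)]
    congr 1
    omega
  have split (g : ℕ → M) : ∑ n ∈ range (2 * m + 1), g n =
      g 0 + (∑ n ∈ range m, g (n + 1) + ∑ n ∈ range m, g (m + 1 + n)) := by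
    rw [sum_range_succ', two_mul, sum_range_add, add_comm]
    simp only [add_right_comm]
  rw [sum_zmod_eq_sum_range, split fun n ↦ f n, upper_half, Nat.add_sub_cancel,
    Nat.mul_div_cancel_left m two_pos, lower_half fun n ↦ f n, two_nsmul, Nat.cast_zero]

end FiniteSums

lemma sum_comp_sq {F : Type*} [Field F] [Fintype F] [DecidableEq F] (hF : ringChar F ≠ 2)
    {R : Type*} [Ring R] (g : F → R) :
    ∑ x, g (x ^ 2) = ∑ a, (quadraticChar F a + 1 : ℤ) * g a := by
  rw [← sum_fiberwise univ (· ^ 2)]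
  refine sum_congr rfl fun a _ ↦ ?_
  rw [sum_congr rfl fun x hx ↦ congrArg g (mem_filter.1 hx).2, sum_const, nsmul_eq_mul,
    ← quadraticChar_card_sqrts hF a, Int.cast_natCast]
  congr 3
  ext
  simp

lemma sub_one_mul_sum_natCast_mul_pow {R : Type*} [CommRing R] [IsDomain R] {z : R} {N : ℕ}
    (hz : z ^ N = 1) (hz₁ : z ≠ 1) : (z - 1) * ∑ n ∈ range N, n * z ^ n = N := by
  have abel_sum (m : ℕ) :
      (z - 1) * ∑ n ∈ range m, n * z ^ n = m * z ^ m - z * ∑ n ∈ range m, z ^ n := by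
    induction m with
    | zero => simp
    | succ m ih =>
      rw [sum_range_succ, mul_add, ih, sum_range_succ]
      push_cast
      ring
  have geom_sum : ∑ n ∈ range N, z ^ n = 0 := by
    have h := mul_geom_sum z N
    rw [hz, sub_self] at h
    exact (mul_eq_zero.1 h).resolve_left (sub_ne_zero.2 hz₁)
  rw [abel_sum, geom_sum, hz, mul_zero, sub_zero, mul_one]

/-- The function `j ↦ cot (π j / N)` on residues modulo `N`, evaluated at the representative in
`[0, N)`; its value at `j = 0` is the junk value `0`, which makes it an odd function. -/
noncomputable def residueCot {N : ℕ} (j : ZMod N) : ℝ :=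
  Real.cot (π * (j.val / N))

lemma ne_one_of_odd {N : ℕ} {χ : DirichletCharacter ℂ N} (hχ : χ.Odd) : χ ≠ 1 := by
  rintro rfl
  have h : (1 : DirichletCharacter ℂ N) (-1) = -1 := hχ
  rw [MulChar.one_apply isUnit_one.neg] at h
  norm_num at h

section LValue

open scoped ComplexOrder

variable {N : ℕ} [NeZero N]

lemma hurwitzZetaOdd_toAddCircle_one (j : ZMod N) :
    hurwitzZetaOdd (ZMod.toAddCircle j) 1 = (π / 2 * residueCot j : ℝ) := by
  rw [ZMod.toAddCircle_apply, residueCot]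
  have hN : (0 : ℝ) < N := by exact_mod_cast NeZero.pos N
  rcases eq_or_ne j 0 with rfl | hj
  · have h := hurwitzZetaOdd_neg 0 1
    rw [neg_zero, self_eq_neg] at h
    simp [h, Real.cot_eq_cos_div_sin]
  · refine hurwitzZetaOdd_apply_one (div_pos ?_ hN) ((div_lt_one hN).2 ?_)
    · exact_mod_cast ZMod.val_pos.2 hj
    · exact_mod_cast ZMod.val_lt j

lemma LFunction_apply_one_of_odd {Φ : ZMod N → ℂ} (hΦ : Φ.Odd) :
    ZMod.LFunction Φ 1 = π / (2 * N) * ∑ j, Φ j * residueCot j := by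
  simp only [ZMod.LFunction_def_odd hΦ, hurwitzZetaOdd_toAddCircle_one, Complex.cpow_neg_one,
    mul_sum]
  refine sum_congr rfl fun j _ ↦ ?_
  push_cast
  ring

lemma LFunction_nonneg_of_isQuadratic {χ : DirichletCharacter ℂ N}
    (hχ : χ.IsQuadratic) {s : ℝ} (hs : 1 < s) : 0 ≤ χ.LFunction s := by
  have euler_factor_nonneg (p : Nat.Primes) : 0 ≤ (1 - χ p * (p : ℂ) ^ (-(s : ℂ)))⁻¹ := by
    have hp : (p : ℝ) ^ (-s) ≤ 1 :=
      Real.rpow_le_one_of_one_le_of_nonpos (by exact_mod_cast p.2.one_le) (by linarith)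
    have hp₀ : 0 ≤ (p : ℝ) ^ (-s) := by positivity
    have hcast : (p : ℂ) ^ (-(s : ℂ)) = ((p : ℝ) ^ (-s) : ℝ) := by
      rw [Complex.ofReal_cpow p.1.cast_nonneg]
      push_cast
      rfl
    rw [hcast, inv_nonneg]
    rcases hχ p with h | h | h <;> rw [h] <;> norm_cast <;> push_cast <;> linarith
  have hprod := DirichletCharacter.LSeries_eulerProduct_hasProd χ (s := s) (by simpa using hs)
  rw [DirichletCharacter.LFunction_eq_LSeries χ (by simpa using hs)]
  exact ge_of_tendsto' hprod fun t ↦ prod_nonneg fun p _ ↦ euler_factor_nonneg p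

lemma LFunction_apply_one_nonneg {χ : DirichletCharacter ℂ N}
    (hχ : χ.IsQuadratic) (hχ₁ : χ ≠ 1) : 0 ≤ χ.LFunction 1 := by
  have hcont : Continuous fun s : ℝ ↦ χ.LFunction s :=
    (DirichletCharacter.differentiable_LFunction hχ₁).continuous.comp Complex.continuous_ofReal
  have hlim : Tendsto (fun s : ℝ ↦ χ.LFunction s) (𝓝[>] 1) (𝓝 (χ.LFunction 1)) := by
    simpa using (hcont.tendsto 1).mono_left nhdsWithin_le_nhds
  refine ge_of_tendsto hlim ?_
  filter_upwards [self_mem_nhdsWithin] with s hs using LFunction_nonneg_of_isQuadratic hχ hs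

end LValue

section FourierTransform

variable {N : ℕ} [NeZero N]

lemma cot_eq_stdAddChar (n : ℕ) :
    (Real.cot (π * (n / N)) : ℂ) =
      (stdAddChar (n : ZMod N) + 1) / (Complex.I * (1 - stdAddChar (n : ZMod N))) := by
  have h := stdAddChar_coe (N := N) n
  rw [Int.cast_natCast] at h
  rw [Complex.ofReal_cot, h]
  push_cast
  rw [Complex.cot_pi_eq_exp_ratio, mul_div_assoc]

lemma residueCot_eq_stdAddChar (j : ZMod N) :
    (residueCot j : ℂ) = (stdAddChar j + 1) / (Complex.I * (1 - stdAddChar j)) := by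
  rw [residueCot, cot_eq_stdAddChar, ZMod.natCast_zmod_val]

lemma residueCot_natCast (n : ℕ) : residueCot (n : ZMod N) = Real.cot (π * (n / N)) := by
  rw [← Complex.ofReal_inj, residueCot_eq_stdAddChar, cot_eq_stdAddChar]

lemma residueCot_odd : (residueCot : ZMod N → ℝ).Odd := by
  intro j
  rw [← Complex.ofReal_inj, Complex.ofReal_neg, residueCot_eq_stdAddChar,
    residueCot_eq_stdAddChar, AddChar.map_neg_eq_inv]
  have hz : stdAddChar j ≠ 0 := (AddChar.val_isUnit stdAddChar j).ne_zero
  rcases eq_or_ne (stdAddChar j) 1 with h | h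
  · simp [h]
  · have h₁ : 1 - stdAddChar j ≠ 0 := sub_ne_zero.2 h.symm
    have h₂ : stdAddChar j - 1 ≠ 0 := sub_ne_zero.2 h
    field_simp
    ring

lemma dft_val_of_ne_zero {j : ZMod N} (hj : j ≠ 0) :
    𝓕 (fun k : ZMod N ↦ (k.val : ℂ)) j = N / 2 * (Complex.I * residueCot j - 1) := by
  set z : ℂ := stdAddChar (-j) with hz
  have hzN : z ^ N = 1 := by
    rw [hz, ← AddChar.map_nsmul_eq_pow]
    simp
  have hz₁ : z ≠ 1 := by
    rwa [hz, ← (stdAddChar (N := N)).map_zero_eq_one, injective_stdAddChar.ne_iff, neg_ne_zero]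
  have hdft : 𝓕 (fun k : ZMod N ↦ (k.val : ℂ)) j = ∑ n ∈ range N, n * z ^ n := by
    rw [dft_apply, sum_zmod_eq_sum_range]
    refine sum_congr rfl fun n hn ↦ ?_
    rw [ZMod.val_cast_of_lt (mem_range.1 hn), hz, ← AddChar.map_nsmul_eq_pow, smul_eq_mul,
      nsmul_eq_mul, mul_neg, mul_comm]
  have hinv : stdAddChar j = z⁻¹ := by rw [hz, AddChar.map_neg_eq_inv, inv_inv]
  have hz₀ : z ≠ 0 := by
    rintro h
    simp [h, NeZero.ne N] at hzN
  rw [hdft, ← mul_right_inj' (sub_ne_zero.2 hz₁), sub_one_mul_sum_natCast_mul_pow hzN hz₁,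
    residueCot_eq_stdAddChar, hinv]
  have : z - 1 ≠ 0 := sub_ne_zero.2 hz₁
  field_simp
  ring

lemma sum_dft_mul_val_of_odd {Φ : ZMod N → ℂ} (hΦ : Φ.Odd) :
    ∑ k, 𝓕 Φ k * k.val = Complex.I * N / 2 * ∑ j, Φ j * residueCot j := by
  have parseval : ∑ k, 𝓕 Φ k * k.val = ∑ j, Φ j * 𝓕 (fun k : ZMod N ↦ (k.val : ℂ)) j := by
    simp only [dft_apply, smul_eq_mul, sum_mul, mul_sum]
    rw [sum_comm]
    refine sum_congr rfl fun j _ ↦ sum_congr rfl fun k _ ↦ ?_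
    rw [mul_comm j k]
    ring
  have hterm (j : ZMod N) : Φ j * 𝓕 (fun k : ZMod N ↦ (k.val : ℂ)) j =
      Complex.I * N / 2 * (Φ j * residueCot j) - N / 2 * Φ j := by
    rcases eq_or_ne j 0 with rfl | hj
    · simp [hΦ.map_zero]
    · rw [dft_val_of_ne_zero hj]
      ring
  rw [parseval, sum_congr rfl fun j _ ↦ hterm j, sum_sub_distrib, ← mul_sum, ← mul_sum,
    hΦ.sum_eq_zero, mul_zero, sub_zero]

end FourierTransform

section GaussSum

variable {p : ℕ} [Fact p.Prime]

lemma isPrimitive_of_ne_one {R : Type*} [CommMonoidWithZero R] {χ : DirichletCharacter R p}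
    (hχ : χ ≠ 1) : χ.IsPrimitive :=
  ((Nat.dvd_prime Fact.out).1 χ.conductor_dvd_level).resolve_left
    (mt χ.eq_one_iff_conductor_eq_one.2 hχ)

lemma four_mul_sum_mul_val_sq {χ : DirichletCharacter ℂ p} (hχ : χ.IsQuadratic) (hχ_odd : χ.Odd) :
    4 * (∑ a, χ a * a.val) ^ 2 = p * (∑ a, χ a * residueCot a) ^ 2 := by
  have hχ₁ : χ ≠ 1 := ne_one_of_odd hχ_odd
  have hp : (p : ℂ) ≠ 0 := NeZero.ne _
  set τ := gaussSum χ stdAddChar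
  have hτ : τ ^ 2 = -p := by
    rw [gaussSum_sq hχ₁ hχ (isPrimitive_stdAddChar p), hχ_odd, ZMod.card, neg_one_mul]
  have hdft (k : ZMod p) : 𝓕 χ k = -τ * χ k := by
    rw [(isPrimitive_of_ne_one hχ₁).fourierTransform_eq_inv_mul_gaussSum, hχ.inv, hχ_odd.to_fun]
    ring
  have h := sum_dft_mul_val_of_odd hχ_odd.to_fun
  simp only [hdft, mul_assoc, ← mul_sum] at h
  refine mul_left_cancel₀ hp ?_
  linear_combination (-4) * (-τ * ∑ a, χ a * a.val + Complex.I * p / 2 * ∑ a, χ a * residueCot a) *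
    h + 4 * (∑ a, χ a * a.val) ^ 2 * hτ - (p * ∑ a, χ a * residueCot a) ^ 2 * Complex.I_sq

end GaussSum

/-- The first moment `∑ a χ(a)`, over the residues `0 ≤ a < p`, of the quadratic character `χ`
modulo `p`; it is the integer whose absolute value is `C p`. -/
def quadraticMoment (p : ℕ) [Fact p.Prime] : ℤ :=
  ∑ a : ZMod p, quadraticChar (ZMod p) a * a.val

/-- The twisted cotangent sum `∑ χ(a) cot (π a / p)` of the quadratic character `χ` modulo `p`,
which links `C p` with both `L(1, χ)` and the moment of `χ`. -/
noncomputable def quadraticCotSum (p : ℕ) [Fact p.Prime] : ℝ :=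
  ∑ a : ZMod p, quadraticChar (ZMod p) a * residueCot a

/-- The quadratic character modulo `p` as a complex Dirichlet character. -/
noncomputable def quadraticDirichletCharacter (p : ℕ) [Fact p.Prime] : DirichletCharacter ℂ p :=
  (quadraticChar (ZMod p)).ringHomComp (Int.castRingHom ℂ)

section QuadraticCharacter

variable {p : ℕ} [Fact p.Prime]

lemma dvd_quadraticMoment (hp : 3 < p) : (p : ℤ) ∣ quadraticMoment p := by
  have hF : ringChar (ZMod p) ≠ 2 := by rw [ZMod.ringChar_zmod_n]; omega
  have hp₅ : 5 ≤ p := (Fact.out : p.Prime).five_le_of_ne_two_of_ne_three (by omega) (by omega)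
  have hpow (a : ZMod p) :
      ((quadraticChar (ZMod p) a * a.val : ℤ) : ZMod p) = a ^ (p / 2 + 1) := by
    push_cast
    rw [quadraticChar_eq_pow_of_char_ne_two' hF, ZMod.card, ZMod.natCast_zmod_val, pow_succ]
  rw [← ZMod.intCast_zmod_eq_zero_iff_dvd, quadraticMoment, Int.cast_sum]
  simp only [hpow]
  exact FiniteField.sum_pow_lt_card_sub_one _ _ (by rw [ZMod.card]; omega)

lemma odd_quadraticMoment (hp : p % 4 = 3) : Odd (quadraticMoment p) := by
  have hsum : Odd (∑ a : ZMod p, (a.val : ℤ)) := by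
    obtain ⟨k, hk⟩ : ∃ k, p = 4 * k + 3 := ⟨p / 4, by omega⟩
    have hval : ∑ a : ZMod p, a.val = p * (2 * k + 1) := by
      have h := two_mul_sum_val p
      rw [show p - 1 = 2 * (2 * k + 1) by omega] at h
      linarith
    exact_mod_cast hval ▸ Odd.mul (Nat.odd_iff.2 (by omega)) (odd_two_mul_add_one k)
  have hdiff : Even (quadraticMoment p - ∑ a : ZMod p, (a.val : ℤ)) := by
    rw [quadraticMoment, ← sum_sub_distrib]
    refine even_sum _ fun a _ ↦ ?_
    rcases eq_or_ne a 0 with rfl | ha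
    · simp
    · rcases quadraticChar_dichotomy ha with h | h <;> rw [h]
      · simp
      · exact ⟨-a.val, by ring⟩
  simpa using hdiff.add_odd hsum

lemma abs_quadraticMoment_lt : |quadraticMoment p| < (p : ℤ) ^ 2 := by
  have hp : 0 < p := NeZero.pos p
  have hsum : 2 * ∑ a : ZMod p, (a.val : ℤ) ≤ p * p := by
    exact_mod_cast (two_mul_sum_val p).trans_le (Nat.mul_le_mul_left p (Nat.sub_le p 1))
  calc |quadraticMoment p|
    _ ≤ ∑ a : ZMod p, |quadraticChar (ZMod p) a * (a.val : ℤ)| := abs_sum_le_sum_abs _ _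
    _ ≤ ∑ a : ZMod p, (a.val : ℤ) := by
      refine sum_le_sum fun a _ ↦ ?_
      rw [abs_mul, Nat.abs_cast]
      refine mul_le_of_le_one_left (Int.natCast_nonneg _) ?_
      rcases quadraticChar_isQuadratic (ZMod p) a with h | h | h <;> simp [h]
    _ < (p : ℤ) ^ 2 := by nlinarith

lemma quadraticDirichletCharacter_apply (a : ZMod p) :
    quadraticDirichletCharacter p a = quadraticChar (ZMod p) a := rfl

lemma isQuadratic_quadraticDirichletCharacter : (quadraticDirichletCharacter p).IsQuadratic :=
  (quadraticChar_isQuadratic _).comp _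

lemma odd_quadraticDirichletCharacter (hp : p % 4 = 3) : (quadraticDirichletCharacter p).Odd := by
  have hF : ringChar (ZMod p) ≠ 2 := by rw [ZMod.ringChar_zmod_n]; omega
  rw [DirichletCharacter.Odd, quadraticDirichletCharacter_apply, quadraticChar_neg_one hF,
    ZMod.card, χ₄_nat_three_mod_four hp]
  norm_num

lemma two_mul_sum_residueCot_sq (hp : p ≠ 2) :
    2 * ∑ n ∈ Icc 1 ((p - 1) / 2), residueCot ((n : ZMod p) ^ 2) = quadraticCotSum p := by
  have heven : (fun x : ZMod p ↦ residueCot (x ^ 2)).Even := fun x ↦ by simp only [neg_sq]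
  have h := sum_comp_sq (by rwa [ZMod.ringChar_zmod_n]) (residueCot : ZMod p → ℝ)
  rw [sum_zmod_eq_of_even ((Fact.out : p.Prime).odd_of_ne_two hp) heven] at h
  simpa [add_mul, sum_add_distrib, residueCot_odd.map_zero, residueCot_odd.sum_eq_zero,
    quadraticCotSum] using h

lemma C_eq_sqrt_mul_quadraticCotSum (hp : p ≠ 2) : C p = √p / 2 * quadraticCotSum p := by
  have hC : C p = √p * ∑ n ∈ Icc 1 ((p - 1) / 2), residueCot ((n : ZMod p) ^ 2) := by
    rw [C]
    congr 1
    refine sum_congr rfl fun n _ ↦ ?_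
    have h := residueCot_natCast (N := p) (n ^ 2)
    push_cast at h
    rw [h, mul_div_assoc]
  rw [hC, ← two_mul_sum_residueCot_sq hp]
  ring

lemma quadraticCotSum_nonneg (hp : p % 4 = 3) : 0 ≤ quadraticCotSum p := by
  have hL := LFunction_apply_one_nonneg (isQuadratic_quadraticDirichletCharacter (p := p))
    (ne_one_of_odd (odd_quadraticDirichletCharacter hp))
  rw [DirichletCharacter.LFunction,
    LFunction_apply_one_of_odd (odd_quadraticDirichletCharacter hp).to_fun] at hL
  have hreal : (π / (2 * p) * quadraticCotSum p : ℝ) = (π / (2 * p) : ℂ) *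
      ∑ a, quadraticDirichletCharacter p a * residueCot a := by
    simp [quadraticCotSum, quadraticDirichletCharacter_apply]
  rw [← hreal, Complex.zero_le_real] at hL
  have hp₀ : (0 : ℝ) < p := by exact_mod_cast NeZero.pos p
  exact nonneg_of_mul_nonneg_right hL (by positivity)

lemma four_mul_quadraticMoment_sq (hp : p % 4 = 3) :
    4 * (quadraticMoment p : ℝ) ^ 2 = p * quadraticCotSum p ^ 2 := by
  have h := four_mul_sum_mul_val_sq (isQuadratic_quadraticDirichletCharacter (p := p))
    (odd_quadraticDirichletCharacter hp)
  rw [← Complex.ofReal_inj]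
  push_cast [quadraticMoment, quadraticCotSum]
  exact h

theorem C_eq_abs_quadraticMoment (hp : p % 4 = 3) : C p = |quadraticMoment p| := by
  have hC := C_eq_sqrt_mul_quadraticCotSum (p := p) (by omega)
  have hC_nonneg : 0 ≤ C p := by
    rw [hC]
    exact mul_nonneg (by positivity) (quadraticCotSum_nonneg hp)
  have hC_sq : C p ^ 2 = (quadraticMoment p : ℝ) ^ 2 := by
    rw [hC, mul_pow, div_pow, Real.sq_sqrt p.cast_nonneg]
    linear_combination -four_mul_quadraticMoment_sq hp / 4
  rw [Int.cast_abs, ← sq_eq_sq₀ hC_nonneg (abs_nonneg _), sq_abs, hC_sq]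

end QuadraticCharacter

theorem C_odd_positive_integer (p : ℕ) (hp : p.Prime) (h3 : p % 4 = 3) (hgt : p > 3) :
    ∃ m : ℤ, C p = (m : ℝ) ∧ Odd m ∧ 0 < m ∧ (p : ℤ) ∣ m ∧ ¬ ((p : ℤ) ^ 2 ∣ m) := by
  have : Fact p.Prime := ⟨hp⟩
  have hodd : Odd (quadraticMoment p) := odd_quadraticMoment h3
  have hne : quadraticMoment p ≠ 0 := fun h ↦ Int.not_odd_zero (h ▸ hodd)
  refine ⟨|quadraticMoment p|, C_eq_abs_quadraticMoment h3, odd_abs.2 hodd, abs_pos.2 hne,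
    (dvd_abs _ _).2 (dvd_quadraticMoment hgt), fun h ↦ hne ?_⟩
  exact Int.eq_zero_of_abs_lt_dvd ((dvd_abs _ _).1 h) abs_quadraticMoment_lt
end

section
/- Let p be a prime with p ≡ 3 (mod 4). Then T(p) = −p · (2/p) · Σ_{k=1}^{(p−1)/2} (k/p), where (2/p) and (k/p) are Legendre symbols. -/
/-- `T p = √p ∑_{n=1}^{(p-1)/2} tan(π n² / p)`. -/
noncomputable def T (p : ℕ) : ℝ :=
  Real.sqrt p * ∑ n ∈ Finset.Icc 1 ((p - 1) / 2), Real.tan (Real.pi * (n : ℝ) ^ 2 / p)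

/-!
Since `i tan z = (w - 1) / (w + 1)` with `w = exp (2iz)`, and `(w - 1) / (w + 1)` is
`-1 - 2 ∑_{k ≤ n / 2} w ^ (2k)` for an `n`-th root of unity `w ≠ 1`, `n` odd, each tangent is a
finite sum of roots of unity. Summed over `n ≤ p / 2`, the exponentials `exp (2πi · 2k n² / p)`
give the quadratic Gauss sum `G` times `(2k/p)`, up to constants that cancel, so that
`i ∑ tan(π n² / p) = -(2/p) G ∑ (k/p)`.

It remains to know that `G = i √p` for `p ≡ 3 (mod 4)`, while for `p ≡ 1 (mod 4)` the half-sum of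
`(k/p)` vanishes. As `G` and `P = ∏_{k ≤ p / 2} (ζ ^ k - ζ ^ (p - k))` have the same square,
`G = ε P` with `ε = ±1`. This lifts to a polynomial relation modulo the `p`-th cyclotomic
polynomial, which reduces to `(X - 1) ^ (p - 1)` modulo `p`; applying `X d/dX` to it `p / 2` times
and setting `X = 1` gives `ε ((p / 2)!) ^ 2 2 ^ (p / 2) = -1` modulo `p`, and Wilson's theorem
determines `ε`.
-/

open Finset Polynomial
open Complex (I)
open scoped Real Nat

theorem prod_Ico_one_eq_prod_Icc_mul_reflect {M : Type*} [CommMonoid M] {n : ℕ} (hn : Odd n)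
    (f : ℕ → M) :
    ∏ k ∈ Ico 1 n, f k = ∏ k ∈ Icc 1 (n / 2), f k * f (n - k) := by
  obtain ⟨m, rfl⟩ := hn
  rw [show (2 * m + 1) / 2 = m by omega, ← Ico_add_one_right_eq_Icc, prod_mul_distrib,
    prod_Ico_reflect f 1 (by omega : m + 1 ≤ 2 * m + 1 + 1),
    show 2 * m + 1 + 1 - (m + 1) = m + 1 by omega, Nat.add_sub_cancel,
    prod_Ico_consecutive f (by omega) (by omega)]

theorem sum_Ico_one_eq_sum_Icc_add_reflect {M : Type*} [AddCommMonoid M] {n : ℕ} (hn : Odd n)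
    (f : ℕ → M) : ∑ k ∈ Ico 1 n, f k = ∑ k ∈ Icc 1 (n / 2), (f k + f (n - k)) :=
  prod_Ico_one_eq_prod_Icc_mul_reflect (M := Multiplicative M) hn f

theorem sum_zmod_eq_add_sum_Icc {M : Type*} [AddCommMonoid M] {n : ℕ} [NeZero n] (hn : Odd n)
    (f : ZMod n → M) :
    ∑ a, f a = f 0 + ∑ k ∈ Icc 1 (n / 2), (f k + f (-k)) := by
  have hrange : ∑ a, f a = ∑ k ∈ range n, f k :=
    sum_nbij' ZMod.val (fun k ↦ (k : ZMod n)) (by simp [ZMod.val_lt]) (by simp) (by simp)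
      (fun k hk ↦ ZMod.val_cast_of_lt (mem_range.1 hk)) (by simp)
  rw [hrange, range_eq_Ico, sum_eq_sum_Ico_succ_bot hn.pos, Nat.cast_zero,
    sum_Ico_one_eq_sum_Icc_add_reflect hn (fun k ↦ f k)]
  congr 1
  refine sum_congr rfl fun k hk ↦ ?_
  rw [Nat.cast_sub (by grind), ZMod.natCast_self, zero_sub]

theorem natCast_factorial_eq_prod_Icc (R : Type*) [CommSemiring R] (n : ℕ) :
    (n ! : R) = ∏ k ∈ Icc 1 n, (k : R) := by
  rw [← prod_Ico_id_eq_factorial, Ico_add_one_right_eq_Icc, Nat.cast_prod]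

theorem ringChar_zmod_ne_two {n : ℕ} (hn : Odd n) : ringChar (ZMod n) ≠ 2 := by
  rw [ZMod.ringChar_zmod_n]
  grind

theorem sq_factorial_half_mul_neg_one_pow (p : ℕ) [Fact p.Prime] (hp : Odd p) :
    ((p / 2)! : ZMod p) ^ 2 * (-1) ^ (p / 2) = -1 := by
  have hreflect : ∀ k ∈ Icc 1 (p / 2), (k : ZMod p) * ((p - k : ℕ) : ZMod p) = k ^ 2 * -1 :=
    fun k hk ↦ by
      rw [Nat.cast_sub (by grind), ZMod.natCast_self]
      ring
  calc ((p / 2)! : ZMod p) ^ 2 * (-1) ^ (p / 2)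
      = ∏ k ∈ Icc 1 (p / 2), (k : ZMod p) ^ 2 * -1 := by
        rw [natCast_factorial_eq_prod_Icc, prod_mul_distrib, prod_pow, prod_const,
          Nat.card_Icc, Nat.add_sub_cancel]
    _ = ∏ k ∈ Ico 1 p, (k : ZMod p) := by
        rw [prod_Ico_one_eq_prod_Icc_mul_reflect hp, prod_congr rfl hreflect]
    _ = -1 := ZMod.prod_Ico_one_prime p

theorem sub_one_div_add_one_eq_of_pow_eq_one {K : Type*} [Field K] {w : K} {n : ℕ} (hn : Odd n)
    (hw : w ^ n = 1) (hw1 : w ≠ 1) :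
    (w - 1) / (w + 1) = -1 - 2 * ∑ k ∈ Icc 1 (n / 2), w ^ (2 * k) := by
  have hw2 : w + 1 ≠ 0 := by
    intro h
    have := eq_neg_of_add_eq_zero_left h
    rw [this, hn.neg_one_pow] at hw
    exact hw1 (this.trans hw)
  have hgeom : (w ^ 2 - 1) * ∑ k ∈ Icc 1 (n / 2), w ^ (2 * k) = w - w ^ 2 := by
    obtain ⟨m, rfl⟩ := hn
    rw [show (2 * m + 1) / 2 = m by omega, ← Ico_add_one_right_eq_Icc]
    simp only [pow_mul]
    rw [mul_comm, geom_sum_Ico_mul _ (by omega)]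
    linear_combination w * hw
  rw [div_eq_iff hw2]
  refine mul_left_cancel₀ (sub_ne_zero.2 hw1) ?_
  linear_combination 2 * hgeom

theorem I_mul_tan_eq_exp_ratio (z : ℂ) : I * Complex.tan z =
    (Complex.exp (2 * I * z) - 1) / (Complex.exp (2 * I * z) + 1) := by
  rw [← Complex.cot_inv_eq_tan, Complex.cot_eq_exp_ratio, inv_div, mul_div_assoc', ← mul_assoc,
    Complex.I_mul_I]
  ring

section QuadraticGaussSum

variable {F R : Type*} [Field F] [Fintype F] [DecidableEq F] [CommRing R]

/-- The quadratic Gauss sum `∑ χ(a) ψ(a)` of an additive character `ψ` of a finite field, where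
`χ` is the quadratic character with its values read in `R`. -/
noncomputable def quadraticGaussSum (ψ : AddChar F R) : R :=
  gaussSum ((quadraticChar F).ringHomComp (Int.castRingHom R)) ψ

theorem quadraticGaussSum_eq_sum (ψ : AddChar F R) :
    quadraticGaussSum ψ = ∑ a, (quadraticChar F a : R) * ψ a :=
  rfl

theorem quadraticGaussSum_mulShift (ψ : AddChar F R) {a : F} (ha : a ≠ 0) :
    quadraticGaussSum (ψ.mulShift a) = quadraticChar F a * quadraticGaussSum ψ := by
  have h := gaussSum_mulShift_eq ((quadraticChar F).ringHomComp (Int.castRingHom R)) ψ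
    (Units.mk0 a ha)
  rwa [((quadraticChar_isQuadratic F).comp _).inv] at h

theorem sum_addChar_sq [IsDomain R] (hF : ringChar F ≠ 2) {ψ : AddChar F R} (hψ : ψ ≠ 1) :
    ∑ x, ψ (x ^ 2) = quadraticGaussSum ψ := by
  have hcard (a : F) : (#{x : F | x ^ 2 = a} : R) = quadraticChar F a + 1 := by
    have h := quadraticChar_card_sqrts hF a
    rw [Set.toFinset_ofPred] at h
    exact_mod_cast congrArg (Int.cast : ℤ → R) h
  calc ∑ x, ψ (x ^ 2)
      = ∑ a, ∑ x with x ^ 2 = a, ψ a := (sum_fiberwise' univ (· ^ 2) ψ).symm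
    _ = ∑ a, (quadraticChar F a : R) * ψ a + ∑ a, ψ a := by
        simp only [sum_const, nsmul_eq_mul, hcard, add_mul, one_mul, sum_add_distrib]
    _ = quadraticGaussSum ψ := by
        rw [AddChar.sum_eq_zero_of_ne_one hψ, add_zero, quadraticGaussSum_eq_sum]

theorem sum_addChar_mul_sq [IsDomain R] (hF : ringChar F ≠ 2) {ψ : AddChar F R}
    (hψ : ψ.IsPrimitive) {a : F} (ha : a ≠ 0) :
    ∑ x, ψ (a * x ^ 2) = quadraticChar F a * quadraticGaussSum ψ := by
  rw [← quadraticGaussSum_mulShift ψ ha, ← sum_addChar_sq hF (hψ ha)]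
  rfl

theorem quadraticGaussSum_sq [IsDomain R] [CharZero R] (hF : ringChar F ≠ 2) {ψ : AddChar F R}
    (hψ : ψ.IsPrimitive) :
    quadraticGaussSum ψ ^ 2 = quadraticChar F (-1) * Fintype.card F :=
  gaussSum_sq ((MulChar.ringHomComp_ne_one_iff (Int.castRingHom R).injective_int).2
    (quadraticChar_ne_one hF)) ((quadraticChar_isQuadratic F).comp _) hψ

end QuadraticGaussSum

section EulerOperator

variable (R : Type*) [CommRing R]

/-- Euler's operator `f ↦ X f'`, which acts on `X ^ j` as multiplication by `j`. Evaluating its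
`n`-th power at `1` kills `(X - 1) ^ (n + 1)` and recovers, up to `n !`, the value at `1` of the
cofactor of `(X - 1) ^ n`. -/
noncomputable def eulerOperator : R[X] →ₗ[R] R[X] :=
  LinearMap.mulLeft R X ∘ₗ derivative

variable {R}

theorem eulerOperator_apply (f : R[X]) : eulerOperator R f = X * derivative f :=
  rfl

theorem eulerOperator_pow_C_mul_X_pow (n : ℕ) (a : R) (j : ℕ) :
    (eulerOperator R ^ n) (C a * X ^ j) = C (a * (j : R) ^ n) * X ^ j := by
  induction n with
  | zero => simp
  | succ n ih =>
    rw [pow_succ', Module.End.mul_apply, ih, eulerOperator_apply, derivative_C_mul_X_pow]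
    cases j with
    | zero => simp
    | succ j =>
      simp only [Nat.add_sub_cancel, pow_succ, map_mul]
      ring

theorem eval_one_eulerOperator_pow_X_sub_one_pow_mul (n : ℕ) (g : R[X]) :
    ((eulerOperator R ^ n) ((X - 1) ^ n * g)).eval 1 = n ! * g.eval 1 := by
  induction n generalizing g with
  | zero => simp
  | succ n ih =>
    have hstep : eulerOperator R ((X - 1) ^ (n + 1) * g) =
        (X - 1) ^ n * ((n + 1 : R[X]) * X * g + (X - 1) * X * derivative g) := by
      simp only [eulerOperator_apply, derivative_mul, derivative_pow, Nat.cast_add, Nat.cast_one,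
        map_add, map_natCast, map_one, add_tsub_cancel_right, derivative_sub, derivative_X,
        derivative_one, sub_zero, mul_one]
      ring
    rw [pow_succ, Module.End.mul_apply, hstep, ih]
    simp only [eval_add, eval_mul, eval_natCast, eval_one, eval_X, mul_one, eval_sub, sub_self,
      zero_mul, add_zero, Nat.factorial_succ, Nat.cast_mul, Nat.cast_add, Nat.cast_one]
    ring

theorem eval_one_eulerOperator_pow_eq_zero {n : ℕ} {f : R[X]} (hf : (X - 1) ^ (n + 1) ∣ f) :
    ((eulerOperator R ^ n) f).eval 1 = 0 := by
  obtain ⟨g, rfl⟩ := hf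
  rw [pow_succ, mul_assoc, eval_one_eulerOperator_pow_X_sub_one_pow_mul]
  simp

theorem eval_one_eulerOperator_pow_prod_X_pow_sub_X_pow {ι : Type*} (s : Finset ι) (a b : ι → ℕ) :
    ((eulerOperator R ^ #s) (∏ i ∈ s, (X ^ a i - X ^ b i))).eval 1 =
      (#s)! * ∏ i ∈ s, ((a i : R) - b i) := by
  have hfactor (i : ι) : (X ^ a i - X ^ b i : R[X]) =
      (X - 1) * (∑ j ∈ range (a i), X ^ j - ∑ j ∈ range (b i), X ^ j) := by
    rw [mul_sub, mul_geom_sum, mul_geom_sum]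
    ring
  simp_rw [hfactor, prod_mul_distrib, prod_const]
  rw [eval_one_eulerOperator_pow_X_sub_one_pow_mul]
  simp [eval_prod, eval_finsetSum]

end EulerOperator

theorem sum_pow_card_sub_one_eq_neg_one (K : Type*) [Field K] [Fintype K] :
    ∑ x : K, x ^ (Fintype.card K - 1) = -1 := by
  classical
  have hterm (x : K) : x ^ (Fintype.card K - 1) = 1 - if x = 0 then 1 else 0 := by
    split_ifs with hx
    · rw [hx, zero_pow (Nat.sub_ne_zero_of_lt Fintype.one_lt_card), sub_self]
    · rw [FiniteField.pow_card_sub_one_eq_one x hx, sub_zero]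
  simp [hterm]

theorem prod_pow_sub_pow_reflect_sq {R : Type*} [CommRing R] [IsDomain R] {n : ℕ} (hn : Odd n)
    {ζ : R} (hζ : IsPrimitiveRoot ζ n) :
    (∏ k ∈ Icc 1 (n / 2), (ζ ^ k - ζ ^ (n - k))) ^ 2 = (-1) ^ (n / 2) * n := by
  have hsq : IsPrimitiveRoot (ζ ^ 2) (n - 1 + 1) := by
    rw [Nat.sub_add_cancel hn.pos]
    exact hζ.pow_of_coprime 2 (Nat.coprime_two_left.2 hn)
  have hterm : ∀ k ∈ Icc 1 (n / 2), (ζ ^ k - ζ ^ (n - k)) ^ 2 =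
      -1 * ((1 - (ζ ^ 2) ^ k) * (1 - (ζ ^ 2) ^ (n - k))) := fun k hk ↦ by
    have hinv : ζ ^ k * ζ ^ (n - k) = 1 := by
      rw [← pow_add, Nat.add_sub_cancel' (by grind), hζ.pow_eq_one]
    rw [pow_right_comm ζ 2 k, pow_right_comm ζ 2 (n - k)]
    linear_combination (ζ ^ k * ζ ^ (n - k) - 1) * hinv
  have horder : ∏ k ∈ Ico 1 n, (1 - (ζ ^ 2) ^ k) = (n : R) := by
    rw [prod_Ico_eq_prod_range]
    simp only [add_comm 1]
    rw [hsq.prod_one_sub_pow_eq_order, ← Nat.cast_add_one, Nat.sub_add_cancel hn.pos]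
  rw [← prod_pow, prod_congr rfl hterm, prod_mul_distrib, prod_const, Nat.card_Icc,
    Nat.add_sub_cancel, ← prod_Ico_one_eq_prod_Icc_mul_reflect hn (fun k ↦ 1 - (ζ ^ 2) ^ k), horder]

section PrimeModulus

variable {p : ℕ} [Fact p.Prime] {K : Type*} [Field K] [CharZero K] {ζ : K}

theorem X_sub_one_pow_dvd_map_of_aeval_eq_zero (hζ : IsPrimitiveRoot ζ p) {f : ℤ[X]}
    (hf : aeval ζ f = 0) : (X - 1) ^ (p - 1) ∣ f.map (Int.castRingHom (ZMod p)) := by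
  have hp : 0 < p := (Fact.out : p.Prime).pos
  have hcyc : cyclotomic p (ZMod p) = (X - 1) ^ (p - 1) := by
    simpa using cyclotomic_mul_prime_eq_pow_of_not_dvd (ZMod p) (Fact.out : p.Prime).not_dvd_one
  rw [← hcyc, ← map_cyclotomic p (Int.castRingHom (ZMod p)), cyclotomic_eq_minpoly hζ hp]
  exact Polynomial.map_dvd _ (minpoly.isIntegrallyClosed_dvd (hζ.isIntegral hp) hf)

theorem eval_one_eulerOperator_pow_sum_quadraticChar (hp : Odd p) :
    ((eulerOperator (ZMod p) ^ (p / 2))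
      (∑ a : ZMod p, C (quadraticChar (ZMod p) a : ZMod p) * X ^ a.val)).eval 1 = -1 := by
  have hterm (a : ZMod p) : (quadraticChar (ZMod p) a : ZMod p) * a ^ (p / 2) = a ^ (p - 1) := by
    rw [quadraticChar_eq_pow_of_char_ne_two' (ringChar_zmod_ne_two hp), ZMod.card, ← pow_add]
    congr 1
    grind
  simp only [map_sum, eulerOperator_pow_C_mul_X_pow, eval_finsetSum, eval_mul, eval_C,
    eval_pow, eval_X, one_pow, mul_one, ZMod.natCast_zmod_val, hterm]
  simpa using sum_pow_card_sub_one_eq_neg_one (ZMod p)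

theorem eval_one_eulerOperator_pow_prod_reflect (hp : Odd p) :
    ((eulerOperator (ZMod p) ^ (p / 2)) (∏ k ∈ Icc 1 (p / 2), (X ^ k - X ^ (p - k)))).eval 1 =
      (p / 2)! ^ 2 * 2 ^ (p / 2) := by
  have hdouble : ∀ k ∈ Icc 1 (p / 2), (k : ZMod p) - (p - k : ℕ) = 2 * k := fun k hk ↦ by
    rw [Nat.cast_sub (by grind), ZMod.natCast_self]
    ring
  have h := eval_one_eulerOperator_pow_prod_X_pow_sub_X_pow (R := ZMod p) (Icc 1 (p / 2)) id (p - ·)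
  simp only [id, Nat.card_Icc, Nat.add_sub_cancel] at h
  rw [h, prod_congr rfl hdouble, prod_mul_distrib, prod_const, Nat.card_Icc, Nat.add_sub_cancel,
    ← natCast_factorial_eq_prod_Icc]
  ring

theorem intCast_mul_factorial_sq_mul_two_pow (hp : Odd p) (hζ : IsPrimitiveRoot ζ p) {ε : ℤ}
    (hε : quadraticGaussSum (AddChar.zmodChar p hζ.pow_eq_one) =
      ε * ∏ k ∈ Icc 1 (p / 2), (ζ ^ k - ζ ^ (p - k))) :
    (ε : ZMod p) * ((p / 2)! ^ 2 * 2 ^ (p / 2)) = -1 := by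
  set f : ℤ[X] := ∑ a : ZMod p, C (quadraticChar (ZMod p) a) * X ^ a.val -
    C ε * ∏ k ∈ Icc 1 (p / 2), (X ^ k - X ^ (p - k)) with hf
  have hroot : aeval ζ f = 0 := by
    rw [quadraticGaussSum_eq_sum] at hε
    simpa [hf, sub_eq_zero, map_sum, map_prod, AddChar.zmodChar_apply] using hε
  have hdvd : (X - 1) ^ (p / 2 + 1) ∣ f.map (Int.castRingHom (ZMod p)) :=
    (pow_dvd_pow _ (by have := (Fact.out : p.Prime).two_le; grind)).trans
      (X_sub_one_pow_dvd_map_of_aeval_eq_zero hζ hroot)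
  have hmap : f.map (Int.castRingHom (ZMod p)) =
      ∑ a : ZMod p, C (quadraticChar (ZMod p) a : ZMod p) * X ^ a.val -
        (ε : ZMod p) • ∏ k ∈ Icc 1 (p / 2), (X ^ k - X ^ (p - k)) := by
    simp [hf, Polynomial.map_sum, Polynomial.map_prod, smul_eq_C_mul]
  have hzero := eval_one_eulerOperator_pow_eq_zero hdvd
  rw [hmap, map_sub, map_smul, eval_sub, eval_smul, smul_eq_mul,
    eval_one_eulerOperator_pow_sum_quadraticChar hp,
    eval_one_eulerOperator_pow_prod_reflect hp] at hzero
  exact (sub_eq_zero.1 hzero).symm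

theorem quadraticChar_neg_one_eq_neg_one_pow (hp : Odd p) :
    quadraticChar (ZMod p) (-1) = (-1) ^ (p / 2) := by
  rw [quadraticChar_neg_one (ringChar_zmod_ne_two hp), ZMod.card,
    ZMod.χ₄_eq_neg_one_pow (Nat.odd_iff.1 hp)]

theorem eq_neg_one_pow_mul_legendreSym_two (hp : Odd p) {ε : ℤ} (hε : IsUnit ε)
    (h : (ε : ZMod p) * ((p / 2)! ^ 2 * 2 ^ (p / 2)) = -1) :
    ε = (-1) ^ (p / 2) * legendreSym p 2 := by
  have htwo : ((2 : ℤ) : ZMod p) ≠ 0 := by exact_mod_cast ZMod.prime_ne_zero p 2 (by grind)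
  have hleg : (legendreSym p 2 : ZMod p) = 2 ^ (p / 2) := by
    simpa using legendreSym.eq_pow p 2
  have hleg_sq : (legendreSym p 2 : ZMod p) ^ 2 = 1 := by
    exact_mod_cast congrArg (Int.cast : ℤ → ZMod p) (legendreSym.sq_one p htwo)
  have hmod : (ε : ZMod p) = (((-1) ^ (p / 2) * legendreSym p 2 : ℤ) : ZMod p) := by
    push_cast
    rw [← hleg] at h
    linear_combination -((-1 : ZMod p) ^ (p / 2) * legendreSym p 2) * h +
      ε * (legendreSym p 2 : ZMod p) ^ 2 * sq_factorial_half_mul_neg_one_pow p hp - ε * hleg_sq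
  have hunit : IsUnit ((-1) ^ (p / 2) * legendreSym p 2) :=
    (isUnit_one.neg.pow _).mul (IsUnit.of_pow_eq_one (legendreSym.sq_one p htwo) two_ne_zero)
  have hmem {u : ℤ} (hu : IsUnit u) : u ∈ ({0, 1, -1} : Set ℤ) :=
    Or.inr (Int.isUnit_iff.1 hu)
  exact Int.cast_injOn_of_ringChar_ne_two (ringChar_zmod_ne_two hp) (hmem hε) (hmem hunit)
    hmod

theorem quadraticGaussSum_zmodChar (hp : Odd p) (hζ : IsPrimitiveRoot ζ p) :
    quadraticGaussSum (AddChar.zmodChar p hζ.pow_eq_one) =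
      ((-1) ^ (p / 2) * legendreSym p 2 : ℤ) *
        ∏ k ∈ Icc 1 (p / 2), (ζ ^ k - ζ ^ (p - k)) := by
  set G := quadraticGaussSum (AddChar.zmodChar p hζ.pow_eq_one)
  set P := ∏ k ∈ Icc 1 (p / 2), (ζ ^ k - ζ ^ (p - k)) with hP
  have hsq : G ^ 2 = P ^ 2 := by
    rw [quadraticGaussSum_sq (ringChar_zmod_ne_two hp)
      (AddChar.zmodChar_primitive_of_primitive_root p hζ), hP, prod_pow_sub_pow_reflect_sq hp hζ,
      ZMod.card, quadraticChar_neg_one_eq_neg_one_pow hp]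
    simp
  obtain ⟨ε, hε, hG⟩ : ∃ ε : ℤ, IsUnit ε ∧ G = ε * P := by
    rcases sq_eq_sq_iff_eq_or_eq_neg.1 hsq with h | h
    · exact ⟨1, isUnit_one, by simpa using h⟩
    · exact ⟨-1, isUnit_one.neg, by simpa using h⟩
  rw [hG, ← eq_neg_one_pow_mul_legendreSym_two hp hε
    (intCast_mul_factorial_sq_mul_two_pow hp hζ hG)]

end PrimeModulus

theorem exp_pow_sub_exp_pow_reflect {n k : ℕ} (hn : n ≠ 0) (hk : k ≤ n) :
    Complex.exp (2 * π * I / n) ^ k - Complex.exp (2 * π * I / n) ^ (n - k) =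
      I * (2 * Real.sin (2 * π * k / n) : ℝ) := by
  have hinv : Complex.exp (2 * π * I / n) ^ (n - k) = (Complex.exp (2 * π * I / n) ^ k)⁻¹ := by
    apply eq_inv_of_mul_eq_one_left
    rw [← pow_add, Nat.sub_add_cancel hk, (Complex.isPrimitiveRoot_exp n hn).pow_eq_one]
  have hangle : (k : ℂ) * (2 * π * I / n) = 2 * π * k / n * I := by ring
  rw [hinv, ← Complex.exp_nat_mul, ← Complex.exp_neg, hangle]
  push_cast
  rw [Complex.two_sin, neg_mul]
  linear_combination
    (Complex.exp (2 * π * k / n * I) - Complex.exp (-(2 * π * k / n * I))) * Complex.I_sq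

theorem prod_exp_pow_sub_exp_pow_reflect {n : ℕ} (hn : Odd n) :
    ∏ k ∈ Icc 1 (n / 2),
        (Complex.exp (2 * π * I / n) ^ k - Complex.exp (2 * π * I / n) ^ (n - k)) =
      I ^ (n / 2) * (√n : ℝ) := by
  have hn0 : (0 : ℝ) < n := by exact_mod_cast hn.pos
  have hprod : ∏ k ∈ Icc 1 (n / 2),
        (Complex.exp (2 * π * I / n) ^ k - Complex.exp (2 * π * I / n) ^ (n - k)) =
      I ^ (n / 2) * (∏ k ∈ Icc 1 (n / 2), 2 * Real.sin (2 * π * k / n) : ℝ) := by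
    rw [prod_congr rfl fun k hk ↦ exp_pow_sub_exp_pow_reflect hn.pos.ne' (by grind : k ≤ n),
      prod_mul_distrib, prod_const, Nat.card_Icc, Nat.add_sub_cancel, Complex.ofReal_prod]
  have hpos : 0 ≤ ∏ k ∈ Icc 1 (n / 2), 2 * Real.sin (2 * π * k / n) := by
    refine prod_nonneg fun k hk ↦ mul_nonneg zero_le_two
      (Real.sin_nonneg_of_nonneg_of_le_pi (by positivity) ?_)
    have hk2 : (2 * k : ℝ) ≤ n := by exact_mod_cast (by grind : 2 * k ≤ n)
    rw [div_le_iff₀ hn0]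
    nlinarith [Real.pi_pos]
  have hsq := prod_pow_sub_pow_reflect_sq hn (Complex.isPrimitiveRoot_exp n hn.pos.ne')
  rw [hprod, mul_pow, ← pow_mul, mul_comm (n / 2) 2, pow_mul, Complex.I_sq] at hsq
  have hval : (∏ k ∈ Icc 1 (n / 2), 2 * Real.sin (2 * π * k / n)) ^ 2 = n := by
    exact_mod_cast mul_left_cancel₀ (pow_ne_zero _ (neg_ne_zero.2 one_ne_zero)) hsq
  rw [hprod, (Real.sqrt_eq_iff_eq_sq hn0.le hpos).2 hval.symm]

theorem stdAddChar_eq_zmodChar (n : ℕ) [NeZero n] : ZMod.stdAddChar (N := n) =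
    AddChar.zmodChar n (Complex.isPrimitiveRoot_exp n (NeZero.ne n)).pow_eq_one := by
  ext a
  rw [ZMod.stdAddChar_apply, ZMod.toCircle_apply, AddChar.zmodChar_apply, ← Complex.exp_nat_mul]
  congr 1
  ring

theorem I_mul_tan_pi_mul_div {n : ℕ} [NeZero n] (hn : Odd n) {a : ℕ} (ha : (a : ZMod n) ≠ 0) :
    I * Complex.tan (π * a / n) =
      -1 - 2 * ∑ k ∈ Icc 1 (n / 2), ZMod.stdAddChar (2 * k * a : ZMod n) := by
  set w : ℂ := ZMod.stdAddChar (a : ZMod n) with hw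
  have hexp : Complex.exp (2 * I * (π * a / n)) = w := by
    have h := ZMod.stdAddChar_coe (N := n) a
    rw [Int.cast_natCast, Int.cast_natCast] at h
    rw [hw, h]
    congr 1
    ring
  have hpow (k : ℕ) : w ^ k = ZMod.stdAddChar (k * a : ZMod n) := by
    rw [hw, ← AddChar.map_nsmul_eq_pow, nsmul_eq_mul]
  have hw1 : w ≠ 1 := by
    rw [hw, ← AddChar.map_zero_eq_one (ZMod.stdAddChar (N := n))]
    exact ZMod.injective_stdAddChar.ne ha
  rw [I_mul_tan_eq_exp_ratio, hexp, sub_one_div_add_one_eq_of_pow_eq_one hn (by simp [hpow]) hw1]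
  simp [hpow]

section ComplexCharacter

variable {p : ℕ} [Fact p.Prime]

theorem quadraticGaussSum_stdAddChar (hp : Odd p) :
    quadraticGaussSum (ZMod.stdAddChar (N := p)) =
      if p % 4 = 1 then (√p : ℂ) else I * √p := by
  have hsign : ((-1) ^ (p / 2) : ℂ) = (I ^ (p / 2)) ^ 2 := by rw [← pow_mul', pow_mul, Complex.I_sq]
  have hcases : p / 2 % 4 = 0 ∧ p % 8 = 1 ∨ p / 2 % 4 = 1 ∧ p % 8 = 3 ∨
      p / 2 % 4 = 2 ∧ p % 8 = 5 ∨ p / 2 % 4 = 3 ∧ p % 8 = 7 := by grind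
  rw [stdAddChar_eq_zmodChar,
    quadraticGaussSum_zmodChar hp (Complex.isPrimitiveRoot_exp p hp.pos.ne'),
    prod_exp_pow_sub_exp_pow_reflect hp, legendreSym.at_two (by grind),
    ZMod.χ₈_nat_eq_if_mod_eight]
  push_cast
  rw [hsign, Complex.I_pow_eq_pow_mod (p / 2)]
  rcases hcases with ⟨h4, h8⟩ | ⟨h4, h8⟩ | ⟨h4, h8⟩ | ⟨h4, h8⟩ <;>
    simp [h4, h8, Complex.I_pow_three, show p % 2 = 1 by omega, show p % 4 = p % 8 % 4 by omega]

theorem two_mul_sum_Icc_addChar_mul_sq {R : Type*} [CommRing R] [IsDomain R] (hp : Odd p)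
    {ψ : AddChar (ZMod p) R} (hψ : ψ.IsPrimitive) {a : ZMod p} (ha : a ≠ 0) :
    2 * ∑ n ∈ Icc 1 (p / 2), ψ (a * n ^ 2) =
      quadraticChar (ZMod p) a * quadraticGaussSum ψ - 1 := by
  rw [← sum_addChar_mul_sq (ringChar_zmod_ne_two hp) hψ ha, sum_zmod_eq_add_sum_Icc hp]
  simp [mul_sum, two_mul]

theorem I_mul_sum_tan_sq (hp : Odd p) :
    I * ∑ n ∈ Icc 1 (p / 2), Complex.tan (π * n ^ 2 / p) =
      -(legendreSym p 2 * (∑ k ∈ Icc 1 (p / 2), (legendreSym p k : ℂ)) *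
        quadraticGaussSum (ZMod.stdAddChar (N := p))) := by
  set G := quadraticGaussSum (ZMod.stdAddChar (N := p))
  have hne : ∀ k ∈ Icc 1 (p / 2), (k : ZMod p) ≠ 0 := fun k hk h ↦ by
    have := Nat.le_of_dvd (by grind) ((ZMod.natCast_eq_zero_iff k p).1 h)
    grind
  have hchar : ∀ k ∈ Icc 1 (p / 2), 2 * ∑ n ∈ Icc 1 (p / 2),
      ZMod.stdAddChar (2 * k * n ^ 2 : ZMod p) = legendreSym p 2 * legendreSym p k * G - 1 :=
    fun k hk ↦ by
      have h2 : (2 : ZMod p) ≠ 0 := by exact_mod_cast ZMod.prime_ne_zero p 2 (by grind)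
      rw [two_mul_sum_Icc_addChar_mul_sq hp (ZMod.isPrimitive_stdAddChar p)
        (mul_ne_zero h2 (hne k hk)), map_mul]
      simp [legendreSym, G]
  have htan : ∀ n ∈ Icc 1 (p / 2), I * Complex.tan (π * n ^ 2 / p) =
      -1 - 2 * ∑ k ∈ Icc 1 (p / 2), ZMod.stdAddChar (2 * k * n ^ 2 : ZMod p) := fun n hn ↦ by
    have h := I_mul_tan_pi_mul_div hp (a := n ^ 2)
      (by rw [Nat.cast_pow]; exact pow_ne_zero 2 (hne n hn))
    rwa [Nat.cast_pow, Nat.cast_pow] at h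
  calc I * ∑ n ∈ Icc 1 (p / 2), Complex.tan (π * n ^ 2 / p)
      = ∑ n ∈ Icc 1 (p / 2),
          (-1 - 2 * ∑ k ∈ Icc 1 (p / 2), ZMod.stdAddChar (2 * k * n ^ 2 : ZMod p)) := by
        rw [mul_sum, sum_congr rfl htan]
    _ = -∑ k ∈ Icc 1 (p / 2), (1 + 2 * ∑ n ∈ Icc 1 (p / 2),
          ZMod.stdAddChar (2 * k * n ^ 2 : ZMod p)) := by
        simp_rw [mul_sum, sum_sub_distrib, sum_add_distrib]
        rw [sum_comm]
        simp only [sum_neg_distrib, sum_const, Nat.card_Icc, add_tsub_cancel_right, nsmul_eq_mul,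
          mul_one, neg_add_rev]
        ring
    _ = -∑ k ∈ Icc 1 (p / 2), (legendreSym p 2 * legendreSym p k * G : ℂ) := by
        rw [sum_congr rfl fun k hk ↦ by rw [hchar k hk, add_sub_cancel]]
    _ = _ := by rw [mul_sum, sum_mul]

theorem sum_legendreSym_half_eq_zero (hp : p % 4 = 1) :
    ∑ k ∈ Icc 1 (p / 2), legendreSym p k = 0 := by
  have heven (a : ZMod p) : quadraticChar (ZMod p) (-a) = quadraticChar (ZMod p) a := by
    rw [neg_eq_neg_one_mul, map_mul, quadraticChar_neg_one_eq_neg_one_pow (by grind),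
      Even.neg_one_pow (by grind), one_mul]
  have h := quadraticChar_sum_zero (F := ZMod p) (ringChar_zmod_ne_two (by grind))
  rw [sum_zmod_eq_add_sum_Icc (by grind)] at h
  simp_rw [heven, ← two_mul, ← mul_sum, quadraticChar_zero, zero_add] at h
  simpa [legendreSym] using h

end ComplexCharacter

theorem T_eq_neg_p_legendre_two_mul_half_sum_general (p : ℕ) [Fact p.Prime] (hp : p ≠ 2) :
    T p = -(p : ℝ) * (legendreSym p 2 : ℝ) *
      ∑ k ∈ Finset.Icc 1 ((p - 1) / 2), (legendreSym p (k : ℤ) : ℝ) := by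
  have hodd : Odd p := (Fact.out : p.Prime).odd_of_ne_two hp
  have hsqrt : (√p : ℂ) * √p = p := by exact_mod_cast Real.mul_self_sqrt p.cast_nonneg
  have htan := I_mul_sum_tan_sq hodd
  rw [quadraticGaussSum_stdAddChar hodd] at htan
  rw [T, show (p - 1) / 2 = p / 2 by grind, ← Complex.ofReal_inj]
  push_cast
  refine mul_left_cancel₀ Complex.I_ne_zero ?_
  split_ifs at htan with h1
  · have hzero : ∑ k ∈ Icc 1 (p / 2), (legendreSym p k : ℂ) = 0 := by
      exact_mod_cast sum_legendreSym_half_eq_zero h1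
    rw [hzero] at htan ⊢
    linear_combination √p * htan
  · linear_combination √p * htan -
      I * legendreSym p 2 * (∑ k ∈ Icc 1 (p / 2), (legendreSym p k : ℂ)) * hsqrt

theorem T_eq_neg_p_legendre_two_mul_half_sum (p : ℕ) [Fact p.Prime] (h3 : p % 4 = 3) :
    T p = -(p : ℝ) * (legendreSym p 2 : ℝ) *
      ∑ k ∈ Finset.Icc 1 ((p - 1) / 2), (legendreSym p (k : ℤ) : ℝ) :=
  T_eq_neg_p_legendre_two_mul_half_sum_general p (by grind)
end
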